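/- arXiv:2210.05759 — 4 statements merged into one kernel-verified Lean document; each statement's English description precedes it below -/
import Mathlib

section
/- Let (x₁', x₂', x₁'', x₂'') be four points of ℝ × ℝ³ satisfying conditions (i), (ii) and (iii). If x₁'⁰ ≥ x₁''⁰, then x₂''⁰ − x₂'⁰ ≤ |𝐱₂' − 𝐱₂''|. -/
/-- For four space-time points of `ℝ × ℝ³` satisfying conditions
(i), (ii) and (iii), `x₁'⁰ ≥ x₁''⁰` implies `x₂''⁰ − x₂'⁰ ≤ |𝐱₂' − 𝐱₂''|`. -/
theorem retarded_case_key_inequality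
    (x₁' x₂' x₁'' x₂'' : ℝ × EuclideanSpace ℝ (Fin 3))
    (hi : x₂'.1 = x₁'.1 - ‖x₁'.2 - x₂'.2‖)
    (hii : x₂''.1 = x₁''.1 - ‖x₁''.2 - x₂''.2‖)
    (hiii : |x₁'.1 - x₁''.1| ≥ ‖x₁'.2 - x₁''.2‖)
    (h : x₁'.1 ≥ x₁''.1) :
    x₂''.1 - x₂'.1 ≤ ‖x₂'.2 - x₂''.2‖ := by
  rw [abs_of_nonneg (sub_nonneg.mpr h)] at hiii
  have h1 := norm_sub_le_norm_sub_add_norm_sub x₁'.2 x₁''.2 x₂'.2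
  have h2 := norm_sub_le_norm_sub_add_norm_sub x₁''.2 x₂''.2 x₂'.2
  have h3 := norm_sub_rev x₂''.2 x₂'.2
  linarith
end

section
/- Let j : (ℝ × ℝ³) × (ℝ × ℝ³) → ℝ^{4×4}, with components j^{μν}(x₁, x₂) for μ, ν ∈ {0,1,2,3}, be continuously differentiable, satisfy the two continuity equations Σ_{μ=0}^{3} ∂_{x₁^μ} j^{μν} = 0 for each ν and Σ_{ν=0}^{3} ∂_{x₂^ν} j^{μν} = 0 for each μ, and have spatially compact support, i.e. there are compact sets K₁, K₂ ⊂ ℝ³ with j(t₁, 𝐱₁, t₂, 𝐱₂) = 0 whenever 𝐱₁ ∉ K₁ or 𝐱₂ ∉ K₂. Then the generalized probability integral (t₁, t₂) ↦ ∫_{ℝ³} ∫_{ℝ³} j^{00}(t₁, 𝐱₁, t₂, 𝐱₂) d𝐱₁ d𝐱₂ is constant, i.e. independent of the pair of times (t₁, t₂). -/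
open MeasureTheory

/-- The coordinate direction in space-time `ℝ × ℝ³` corresponding to the
index `μ ∈ {0,1,2,3}`: the time direction for `μ = 0`, the `k`-th spatial
unit vector for `μ = k ∈ {1,2,3}`. -/
noncomputable def dir4 (μ : Fin 4) : ℝ × (Fin 3 → ℝ) :=
  if h : μ = 0 then (1, 0) else (0, Pi.single (μ.pred h) 1)

/-- The integral of a directional derivative of a compactly supported function vanishes. -/
theorem aux_integral_fderiv_zero (g : (Fin 3 → ℝ) → ℝ) (hg : ContDiff ℝ 1 g)
    (hs : HasCompactSupport g) (v : Fin 3 → ℝ) :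
    Integrable (fun x => fderiv ℝ g x v) ∧ ∫ x, fderiv ℝ g x v = 0 := by
  have hi : Integrable (fun x => fderiv ℝ g x v) :=
    Continuous.integrable_of_hasCompactSupport
      ((hg.continuous_fderiv one_ne_zero).clm_apply continuous_const) (hs.fderiv_apply ℝ v)
  refine ⟨hi, ?_⟩
  have h := integral_mul_fderiv_eq_neg_fderiv_mul_of_integrable (μ := volume)
    (f := fun _ : Fin 3 → ℝ => (1 : ℝ)) (g := g) (v := v) (by simp) (by simpa using hi)
    (by simpa using hg.continuous.integrable_of_hasCompactSupport hs)
    (fun x _ => differentiableAt_const _)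
    (fun x _ => (hg.differentiable one_ne_zero) x)
  simpa using h

/-- One-particle conservation. -/
theorem aux_one_particle (J : ℝ × (Fin 3 → ℝ) → Fin 4 → ℝ) (hJ : ∀ μ, ContDiff ℝ 1 (fun q => J q μ))
    (hc : ∀ p, ∑ μ, fderiv ℝ (fun q => J q μ) p (dir4 μ) = 0)
    (K : Set (Fin 3 → ℝ)) (hK : IsCompact K) (hs : ∀ t x, x ∉ K → J (t, x) = 0) (s t : ℝ) :
    ∫ x, J (s, x) 0 = ∫ x, J (t, x) 0 := by
  have hsl : ∀ (t : ℝ) (μ : Fin 4), ContDiff ℝ 1 (fun x => J (t, x) μ) := fun t μ =>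
    (hJ μ).comp (contDiff_prodMk_right t)
  have hcs : ∀ (t : ℝ) (μ : Fin 4), HasCompactSupport (fun x => J (t, x) μ) := fun t μ =>
    HasCompactSupport.intro hK (fun x hx => by simp [hs t x hx])
  have hsp : ∀ (t : ℝ) (μ : Fin 4) (x v : Fin 3 → ℝ),
      fderiv ℝ (fun x => J (t, x) μ) x v = fderiv ℝ (fun q => J q μ) (t, x) (0, v) := by
    intro t μ x v
    have h1 := ((hJ μ).differentiable one_ne_zero (t, x)).hasFDerivAt.comp x
      (hasFDerivAt_prodMk_right t x)
    have h2 : HasFDerivAt (fun x => J (t, x) μ) _ x := h1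
    rw [h2.fderiv]
    simp
  have htd : ∀ (t : ℝ) (x : Fin 3 → ℝ),
      HasDerivAt (fun t => J (t, x) 0) (fderiv ℝ (fun q => J q 0) (t, x) (1, 0)) t := by
    intro t x
    have h1 := ((hJ 0).differentiable one_ne_zero (t, x)).hasFDerivAt.comp_hasDerivAt t
      ((hasDerivAt_id t).prodMk (hasDerivAt_const t x))
    exact h1
  have hcD : Continuous (fun p : ℝ × (Fin 3 → ℝ) => fderiv ℝ (fun q => J q 0) p (1, 0)) :=
    ((hJ 0).continuous_fderiv one_ne_zero).clm_apply continuous_const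
  have hzero : ∀ t, ∫ x, fderiv ℝ (fun q => J q 0) (t, x) (1, 0) = 0 := by
    intro t
    have e : ∀ x, fderiv ℝ (fun q => J q 0) (t, x) (1, 0)
        = - ∑ k : Fin 3, fderiv ℝ (fun x => J (t, x) k.succ) x (Pi.single k 1) := by
      intro x
      have h := hc (t, x)
      rw [Fin.sum_univ_succ] at h
      simp only [dir4, Fin.succ_ne_zero, dite_true, dite_false, Fin.pred_succ] at h
      simp only [hsp]
      linarith
    simp only [e]
    rw [integral_neg, integral_finsetSum _ (fun k _ =>
      (aux_integral_fderiv_zero _ (hsl t k.succ) (hcs t k.succ) _).1)]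
    rw [Finset.sum_eq_zero (fun k _ =>
      (aux_integral_fderiv_zero _ (hsl t k.succ) (hcs t k.succ) _).2), neg_zero]
  have hder : ∀ t, HasDerivAt (fun t => ∫ x, J (t, x) 0) 0 t := by
    intro t₀
    obtain ⟨C, hC⟩ := ((isCompact_closedBall t₀ 1).prod hK).exists_bound_of_continuousOn
      hcD.continuousOn
    have h := hasDerivAt_integral_of_dominated_loc_of_deriv_le (μ := volume)
      (F := fun t x => J (t, x) 0) (x₀ := t₀)
      (F' := fun t x => fderiv ℝ (fun q => J q 0) (t, x) (1, 0))
      (bound := K.indicator (fun _ => C)) (Metric.closedBall_mem_nhds t₀ one_pos)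
      (Filter.Eventually.of_forall fun t => (hsl t 0).continuous.aestronglyMeasurable)
      ((hsl t₀ 0).continuous.integrable_of_hasCompactSupport (hcs t₀ 0))
      (hcD.comp (Continuous.prodMk_right t₀)).aestronglyMeasurable
      (Filter.Eventually.of_forall fun x t ht => by
        by_cases hx : x ∈ K
        · simpa [hx] using hC (t, x) ⟨ht, hx⟩
        · have h0 : (fun t => J (t, x) 0) = fun _ => 0 := by
            funext t; simp [hs t x hx]
          have h1 := htd t x
          rw [h0] at h1
          rw [h1.unique (hasDerivAt_const t 0)]
          simp [hx])
      ((integrable_indicator_iff hK.measurableSet).2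
        (integrableOn_const hK.measure_lt_top.ne))
      (Filter.Eventually.of_forall fun x t _ => htd t x)
    have h2 := h.2
    rwa [hzero] at h2
  exact is_const_of_deriv_eq_zero (fun t => (hder t).differentiableAt)
    (fun t => (hder t).deriv) s t

/-- A continuously differentiable two-particle tensor current
`j^{μν}(x₁, x₂)` with spatially compact support satisfying the two multi-time
continuity equations `Σ_μ ∂_{x₁^μ} j^{μν} = 0` and `Σ_ν ∂_{x₂^ν} j^{μν} = 0`
has a conserved generalized probability integral: the double spatial integral
`(t₁, t₂) ↦ ∫∫ j^{00}(t₁, 𝐱₁, t₂, 𝐱₂) d𝐱₁ d𝐱₂` is independent of `(t₁, t₂)`. -/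
theorem multitime_continuity_implies_global_conservation
    (j : (ℝ × (Fin 3 → ℝ)) × (ℝ × (Fin 3 → ℝ)) → Fin 4 → Fin 4 → ℝ)
    (hj : ContDiff ℝ 1 j)
    (hcont₁ : ∀ ν : Fin 4, ∀ p, ∑ μ, fderiv ℝ (fun q => j q μ ν) p (dir4 μ, 0) = 0)
    (hcont₂ : ∀ μ : Fin 4, ∀ p, ∑ ν, fderiv ℝ (fun q => j q μ ν) p (0, dir4 ν) = 0)
    (K₁ K₂ : Set (Fin 3 → ℝ)) (hK₁ : IsCompact K₁) (hK₂ : IsCompact K₂)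
    (hsupp : ∀ t₁ x₁ t₂ x₂, x₁ ∉ K₁ ∨ x₂ ∉ K₂ → j ((t₁, x₁), (t₂, x₂)) = 0)
    (s₁ s₂ t₁ t₂ : ℝ) :
    ∫ x₁, ∫ x₂, j ((s₁, x₁), (s₂, x₂)) 0 0 = ∫ x₁, ∫ x₂, j ((t₁, x₁), (t₂, x₂)) 0 0 := by
  have hc : ∀ μ ν, ContDiff ℝ 1 (fun q => j q μ ν) := fun μ ν =>
    contDiff_pi.1 (contDiff_pi.1 hj μ) ν
  have hd : ∀ μ ν, Differentiable ℝ (fun q => j q μ ν) := fun μ ν =>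
    (hc μ ν).differentiable one_ne_zero
  have hswap : ∀ a b : ℝ, ∫ x₁, ∫ x₂, j ((a, x₁), (b, x₂)) 0 0
      = ∫ x₂, ∫ x₁, j ((a, x₁), (b, x₂)) 0 0 := by
    intro a b
    refine integral_integral_swap_of_hasCompactSupport
      (f := fun x₁ x₂ => j ((a, x₁), (b, x₂)) 0 0) ?_ ?_
    · exact (hc 0 0).continuous.comp (f := fun p : (Fin 3 → ℝ) × (Fin 3 → ℝ) =>
        ((a, p.1), (b, p.2))) (by fun_prop)
    · refine HasCompactSupport.intro (hK₁.prod hK₂) ?_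
      rintro ⟨x₁, x₂⟩ hx
      have : x₁ ∉ K₁ ∨ x₂ ∉ K₂ := by
        by_contra hcon
        push Not at hcon
        exact hx ⟨hcon.1, hcon.2⟩
      simp [Function.uncurry, hsupp a x₁ b x₂ this]
  have h2 : ∫ x₁, ∫ x₂, j ((s₁, x₁), (s₂, x₂)) 0 0 = ∫ x₁, ∫ x₂, j ((s₁, x₁), (t₂, x₂)) 0 0 := by
    refine integral_congr_ae (Filter.Eventually.of_forall fun x₁ => ?_)
    refine aux_one_particle (fun q ν => j ((s₁, x₁), q) 0 ν)
      (fun ν => (hc 0 ν).comp (contDiff_prodMk_right _)) ?_ K₂ hK₂ ?_ s₂ t₂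
    · intro p
      rw [← hcont₂ 0 ((s₁, x₁), p)]
      refine Finset.sum_congr rfl fun ν _ => ?_
      have h1 : HasFDerivAt (fun q => j ((s₁, x₁), q) 0 ν) _ p :=
        (hd 0 ν ((s₁, x₁), p)).hasFDerivAt.comp p (hasFDerivAt_prodMk_right (s₁, x₁) p)
      rw [h1.fderiv]
      simp
    · intro t x hx
      funext ν
      simp [hsupp s₁ x₁ t x (Or.inr hx)]
  rw [h2, hswap, hswap]
  refine integral_congr_ae (Filter.Eventually.of_forall fun x₂ => ?_)
  refine aux_one_particle (fun q μ => j (q, (t₂, x₂)) μ 0)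
    (fun μ => (hc μ 0).comp (contDiff_prodMk_left _)) ?_ K₁ hK₁ ?_ s₁ t₁
  · intro p
    rw [← hcont₁ 0 (p, (t₂, x₂))]
    refine Finset.sum_congr rfl fun μ _ => ?_
    have h0 := (hd μ 0 (p, (t₂, x₂))).hasFDerivAt.comp p
      (hasFDerivAt_prodMk_left (𝕜 := ℝ) p (t₂, x₂))
    have h1 : HasFDerivAt (fun q => j (q, (t₂, x₂)) μ 0) _ p := h0
    rw [h1.fderiv]
    simp
  · intro t x hx
    funext μ
    simp [hsupp t x t₂ x₂ (Or.inl hx)]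
end

section
/- Let j : ℝ × ℝ³ → ℝ⁴, written j = (j⁰, j¹, j², j³), be continuously differentiable with spatially compact support (there is a compact K ⊂ ℝ³ with j(t, 𝐱) = 0 for 𝐱 ∉ K). Suppose that the flux F(τ) = ∫_{ℝ³} ( j⁰(τ(𝐱), 𝐱) − Σ_{k=1}^{3} j^k(τ(𝐱), 𝐱) ∂_k τ(𝐱) ) d𝐱 takes the same value for every smooth function τ : ℝ³ → ℝ which is constant outside some compact set and satisfies sup_{𝐱} |∇τ(𝐱)| < 1. Then j satisfies the continuity equation ∂_t j⁰ + Σ_{k=1}^{3} ∂_{x^k} j^k = 0 everywhere. -/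
open MeasureTheory

theorem bubble_hasDerivAt_integral (G : ℝ × (Fin 3 → ℝ) → ℝ) (hG : ContDiff ℝ 1 G)
    (K : Set (Fin 3 → ℝ)) (hK : IsCompact K) (hsupp : ∀ s x, x ∉ K → G (s, x) = 0) :
    HasDerivAt (fun s => ∫ x, G (s, x)) (∫ x, deriv (fun s => G (s, x)) 0) 0 := by
  have hd : ∀ s x, HasDerivAt (fun s => G (s, x)) (fderiv ℝ G (s, x) (1, 0)) s := by
    intro s x
    have h1 : HasFDerivAt G (fderiv ℝ G (s, x)) (s, x) :=
      (hG.differentiable one_ne_zero (s, x)).hasFDerivAt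
    have h2 : HasDerivAt (fun s : ℝ => (s, x)) ((1 : ℝ), (0 : Fin 3 → ℝ)) s :=
      (hasDerivAt_id s).prodMk (hasDerivAt_const s x)
    exact h1.comp_hasDerivAt s h2
  have hcont : Continuous (fun p : ℝ × (Fin 3 → ℝ) => fderiv ℝ G p (1, 0)) :=
    (hG.continuous_fderiv one_ne_zero).clm_apply continuous_const
  have hzero : ∀ s x, x ∉ K → fderiv ℝ G (s, x) (1, 0) = 0 := by
    intro s x hx
    have h := hd s x
    have h0 : (fun s => G (s, x)) = fun _ => 0 := by
      funext s; exact hsupp s x hx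
    rw [h0] at h
    exact h.unique (hasDerivAt_const s (0 : ℝ))
  obtain ⟨C, hC⟩ := ((isCompact_Icc (a := (-1 : ℝ)) (b := 1)).prod hK).exists_bound_of_continuousOn
    hcont.continuousOn
  have key := hasDerivAt_integral_of_dominated_loc_of_deriv_le (μ := (volume : Measure (Fin 3 → ℝ)))
    (F := fun s x => G (s, x)) (x₀ := (0 : ℝ)) (s := Set.Icc (-1) 1)
    (F' := fun s x => fderiv ℝ G (s, x) (1, 0)) (bound := K.indicator (fun _ => C))
    (Icc_mem_nhds (by norm_num) (by norm_num))
    (Filter.Eventually.of_forall fun s =>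
      (hG.continuous.comp (by fun_prop : Continuous fun x : Fin 3 → ℝ => (s, x))).aestronglyMeasurable)
    ((hG.continuous.comp (by fun_prop : Continuous fun x : Fin 3 → ℝ => ((0 : ℝ), x))).integrable_of_hasCompactSupport
      (HasCompactSupport.intro hK fun x hx => hsupp 0 x hx))
    ((hcont.comp (by fun_prop : Continuous fun x : Fin 3 → ℝ => ((0 : ℝ), x))).aestronglyMeasurable)
    (Filter.Eventually.of_forall fun x s hs => by
      by_cases hx : x ∈ K
      · simpa [hx] using hC (s, x) ⟨hs, hx⟩
      · simp [hx, hzero s x hx])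
    ((integrable_indicator_iff hK.measurableSet).2
      (integrableOn_const hK.measure_lt_top.ne))
    (Filter.Eventually.of_forall fun x s _ => hd s x)
  have := key.2
  simpa only [(hd 0 _).deriv] using this

theorem bubble_weak
    (j : ℝ × (Fin 3 → ℝ) → Fin 4 → ℝ)
    (hj : ContDiff ℝ 1 j)
    (K : Set (Fin 3 → ℝ)) (hK : IsCompact K)
    (hsupp : ∀ t x, x ∉ K → j (t, x) = 0) (t : ℝ) (φ : (Fin 3 → ℝ) → ℝ)
    (hφ : ContDiff ℝ (⊤ : ℕ∞) φ)
    (hconst : ∀ᶠ s in nhds (0 : ℝ), ∫ x, (j (t + s * φ x, x) 0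
          - s * ∑ k : Fin 3, j (t + s * φ x, x) k.succ * fderiv ℝ φ x (Pi.single k 1))
        = ∫ x, j (t, x) 0) :
    ∫ x, (φ x * fderiv ℝ (fun q => j q 0) (t, x) (1, 0)
      - ∑ k : Fin 3, j (t, x) k.succ * fderiv ℝ φ x (Pi.single k 1)) = 0 := by
  have hjc : ∀ μ, ContDiff ℝ 1 (fun q => j q μ) := fun μ => contDiff_pi.1 hj μ
  have hφ1 : ContDiff ℝ 1 φ := hφ.of_le (by exact_mod_cast le_top)
  have hdφ : ∀ v, ContDiff ℝ 1 (fun x => fderiv ℝ φ x v) := fun v =>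
    (hφ.fderiv_right (m := 1) (by norm_cast)).clm_apply contDiff_const
  have hin : ContDiff ℝ 1 (fun p : ℝ × (Fin 3 → ℝ) => (t + p.1 * φ p.2, p.2)) :=
    (contDiff_const.add (contDiff_fst.mul (hφ1.comp contDiff_snd))).prodMk contDiff_snd
  have hcomp : ∀ μ, ContDiff ℝ 1 (fun p : ℝ × (Fin 3 → ℝ) => j (t + p.1 * φ p.2, p.2) μ) :=
    fun μ => (hjc μ).comp hin
  have h := bubble_hasDerivAt_integral (fun p => j (t + p.1 * φ p.2, p.2) 0
      - p.1 * ∑ k : Fin 3, j (t + p.1 * φ p.2, p.2) k.succ * fderiv ℝ φ p.2 (Pi.single k 1))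
    ((hcomp 0).sub (contDiff_fst.mul (ContDiff.sum fun k _ =>
      (hcomp k.succ).mul ((hdφ _).comp contDiff_snd)))) K hK
    (fun s x hx => by simp [hsupp _ x hx])
  have h0 := (hasDerivAt_const (0 : ℝ) (∫ x, j (t, x) 0)).congr_of_eventuallyEq hconst
  have h1 := h.unique h0
  rw [← h1]
  congr 1
  funext x
  symm
  have hd : ∀ μ, HasDerivAt (fun s : ℝ => j (t + s * φ x, x) μ)
      (φ x * fderiv ℝ (fun q => j q μ) (t, x) (1, 0)) 0 := by
    intro μ
    have h1 : HasFDerivAt (fun q => j q μ) (fderiv ℝ (fun q => j q μ) (t, x)) (t + 0 * φ x, x) := by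
      have := ((hjc μ).differentiable one_ne_zero (t, x)).hasFDerivAt
      simpa using this
    have h2 : HasDerivAt (fun s : ℝ => (t + s * φ x, x)) (φ x, (0 : Fin 3 → ℝ)) 0 := by
      refine HasDerivAt.prodMk ?_ (hasDerivAt_const _ x)
      simpa using ((hasDerivAt_id (0 : ℝ)).mul_const (φ x)).const_add t
    have h3 := h1.comp_hasDerivAt (0 : ℝ) h2
    have h4 : ((φ x, 0) : ℝ × (Fin 3 → ℝ)) = φ x • (1, 0) := by simp
    rw [h4, map_smul, smul_eq_mul] at h3
    exact h3
  have hS := HasDerivAt.fun_sum (u := Finset.univ) (fun (k : Fin 3) _ =>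
    (hd k.succ).mul_const (fderiv ℝ φ x (Pi.single k 1)))
  have := ((hd 0).fun_sub ((hasDerivAt_id' (0 : ℝ)).fun_mul hS)).deriv
  rw [this]
  simp

/-- the 'bubble argument': Let `j : ℝ × ℝ³ → ℝ⁴` be a
continuously differentiable current with spatially compact support. If the
flux `F(τ) = ∫ (j⁰(τ(𝐱),𝐱) − Σ_k j^k(τ(𝐱),𝐱) ∂_k τ(𝐱)) d𝐱` takes the same
value for every smooth `τ : ℝ³ → ℝ` which is constant outside some compact
set and has Euclidean gradient norm with supremum `< 1`, then `j` satisfies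
the continuity equation `∂_t j⁰ + Σ_k ∂_{x^k} j^k = 0` everywhere. -/
theorem global_conservation_on_cauchy_surfaces_implies_continuity
    (j : ℝ × (Fin 3 → ℝ) → Fin 4 → ℝ)
    (hj : ContDiff ℝ 1 j)
    (K : Set (Fin 3 → ℝ)) (hK : IsCompact K)
    (hsupp : ∀ t x, x ∉ K → j (t, x) = 0)
    (hflux : ∀ τ₁ τ₂ : (Fin 3 → ℝ) → ℝ,
      ContDiff ℝ (⊤ : ℕ∞) τ₁ → ContDiff ℝ (⊤ : ℕ∞) τ₂ →
      (∃ (C : Set (Fin 3 → ℝ)) (r : ℝ), IsCompact C ∧ ∀ x ∉ C, τ₁ x = r) →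
      (∃ (C : Set (Fin 3 → ℝ)) (r : ℝ), IsCompact C ∧ ∀ x ∉ C, τ₂ x = r) →
      (∃ c < (1 : ℝ), ∀ x,
        Real.sqrt (∑ k : Fin 3, (fderiv ℝ τ₁ x (Pi.single k 1)) ^ 2) ≤ c) →
      (∃ c < (1 : ℝ), ∀ x,
        Real.sqrt (∑ k : Fin 3, (fderiv ℝ τ₂ x (Pi.single k 1)) ^ 2) ≤ c) →
      ∫ x, (j (τ₁ x, x) 0
          - ∑ k : Fin 3, j (τ₁ x, x) k.succ * fderiv ℝ τ₁ x (Pi.single k 1))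
        = ∫ x, (j (τ₂ x, x) 0
          - ∑ k : Fin 3, j (τ₂ x, x) k.succ * fderiv ℝ τ₂ x (Pi.single k 1))) :
    ∀ p, ∑ μ, fderiv ℝ (fun q => j q μ) p (dir4 μ) = 0 := by
  have hjc : ∀ μ, ContDiff ℝ 1 (fun q => j q μ) := fun μ => contDiff_pi.1 hj μ
  have hdc : ∀ μ v, Continuous (fun p => fderiv ℝ (fun q => j q μ) p v) := fun μ v =>
    ((hjc μ).continuous_fderiv one_ne_zero).clm_apply continuous_const
  rintro ⟨t, x₀⟩
  have hix : Continuous (fun x : Fin 3 → ℝ => (t, x)) := by fun_prop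
  set D : (Fin 3 → ℝ) → ℝ := fun x => ∑ μ, fderiv ℝ (fun q => j q μ) (t, x) (dir4 μ) with hD
  have hDc : Continuous D := continuous_finsetSum _ fun μ _ => (hdc μ _).comp hix
  have hae : ∀ᵐ x ∂(volume : Measure (Fin 3 → ℝ)), D x = 0 := by
    refine ae_eq_zero_of_integral_contDiff_smul_eq_zero hDc.locallyIntegrable ?_
    intro φ hφ hφs
    have hφd : Differentiable ℝ φ := hφ.differentiable (by simp)
    have hdφ : ∀ v, Continuous (fun x => fderiv ℝ φ x v) := fun v =>
      (hφ.continuous_fderiv (by simp)).clm_apply continuous_const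
    have hw := bubble_weak j hj K hK hsupp t φ hφ ?_
    · -- integration by parts
      have hjx : ∀ μ, ContDiff ℝ 1 (fun x => j (t, x) μ) := fun μ =>
        (hjc μ).comp (contDiff_const.prodMk contDiff_id)
      have hjf : ∀ μ x v, fderiv ℝ (fun x => j (t, x) μ) x v
          = fderiv ℝ (fun q => j q μ) (t, x) (0, v) := by
        intro μ x v
        have h1 := ((hjc μ).differentiable one_ne_zero (t, x)).hasFDerivAt
        have h2 : HasFDerivAt (fun x : Fin 3 → ℝ => (t, x))
          (ContinuousLinearMap.inr ℝ ℝ (Fin 3 → ℝ)) x := hasFDerivAt_prodMk_right t x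
        have h3 := (h1.comp x h2).fderiv
        have h4 : fderiv ℝ (fun x => j (t, x) μ) x = _ := h3
        rw [h4]; simp
      have i1 : ∀ (μ : Fin 4) (v : ℝ × (Fin 3 → ℝ)),
          Integrable (fun x => φ x * fderiv ℝ (fun q => j q μ) (t, x) v) := fun μ v =>
        (hφ.continuous.mul ((hdc μ v).comp hix)).integrable_of_hasCompactSupport hφs.mul_right
      have i2 : ∀ (μ : Fin 4) v, Integrable (fun x => j (t, x) μ * fderiv ℝ φ x v) := fun μ v =>
        ((hjx μ).continuous.mul (hdφ v)).integrable_of_hasCompactSupport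
          (HasCompactSupport.mul_left (hφs.fderiv_apply (𝕜 := ℝ) v))
      have i3 : ∀ (μ : Fin 4), Integrable (fun x => j (t, x) μ * φ x) := fun μ =>
        ((hjx μ).continuous.mul hφ.continuous).integrable_of_hasCompactSupport hφs.mul_left
      have ibp : ∀ (μ : Fin 4) v, ∫ x, j (t, x) μ * fderiv ℝ φ x v
          = - ∫ x, φ x * fderiv ℝ (fun q => j q μ) (t, x) (0, v) := by
        intro μ v
        have := integral_mul_fderiv_eq_neg_fderiv_mul_of_integrable
          (μ := (volume : Measure (Fin 3 → ℝ))) (f := fun x => j (t, x) μ) (g := φ) (v := v)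
          (by simpa only [hjf, mul_comm] using i1 μ (0, v)) (i2 μ v) (i3 μ)
          (fun x _ => (hjx μ).differentiable one_ne_zero x) (fun x _ => hφd x)
        rw [this]
        congr 1
        congr 1
        funext x
        rw [hjf, mul_comm]
      rw [integral_sub (i1 0 _) (integrable_finsetSum _ fun k _ => i2 _ _),
        integral_finsetSum _ (fun k _ => i2 _ _)] at hw
      simp only [ibp] at hw
      have e : ∀ x, φ x • D x = φ x * fderiv ℝ (fun q => j q 0) (t, x) (1, 0)
          + ∑ k : Fin 3, φ x * fderiv ℝ (fun q => j q k.succ) (t, x) (0, Pi.single k 1) := by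
        intro x
        rw [hD]
        simp only [Fin.sum_univ_succ (n := 3), smul_eq_mul, mul_add, Finset.mul_sum, dir4]
        simp
      simp only [e]
      rw [integral_add (i1 0 _) (integrable_finsetSum _ fun k _ => i1 _ _),
        integral_finsetSum _ (fun k _ => i1 _ _)]
      simpa using hw
    · -- constancy of the flux
      have hgc : Continuous (fun x => Real.sqrt (∑ k : Fin 3, (fderiv ℝ φ x (Pi.single k 1)) ^ 2)) :=
        Real.continuous_sqrt.comp (continuous_finsetSum _ fun k _ => (hdφ _).pow 2)
      have hgs : HasCompactSupport
          (fun x => Real.sqrt (∑ k : Fin 3, (fderiv ℝ φ x (Pi.single k 1)) ^ 2)) := by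
        refine HasCompactSupport.intro (hφs.fderiv (𝕜 := ℝ)) fun x hx => ?_
        simp [image_eq_zero_of_notMem_tsupport hx]
      obtain ⟨M, hM⟩ := hgs.exists_bound_of_continuous hgc
      have hM0 : 0 ≤ M := (norm_nonneg _).trans (hM 0)
      have hsmall : ∀ᶠ s in nhds (0 : ℝ), |s| * M < 1 / 2 := by
        have : Continuous (fun s : ℝ => |s| * M) := by fun_prop
        have h := this.tendsto 0
        simp only [abs_zero, zero_mul] at h
        exact h.eventually (gt_mem_nhds (by norm_num))
      filter_upwards [hsmall] with s hs
      have hfd : ∀ x v, fderiv ℝ (fun x => t + s * φ x) x v = s * fderiv ℝ φ x v := by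
        intro x v
        rw [(((hφd x).hasFDerivAt.const_mul s).const_add t).fderiv]
        simp
      have := hflux (fun x => t + s * φ x) (fun _ => t)
        (contDiff_const.add (contDiff_const.mul hφ)) contDiff_const
        ⟨tsupport φ, t, hφs, fun x hx => by simp [image_eq_zero_of_notMem_tsupport hx]⟩
        ⟨∅, t, isCompact_empty, fun x _ => rfl⟩
        ⟨1 / 2, by norm_num, fun x => by
          simp only [hfd, mul_pow, ← Finset.mul_sum]
          rw [Real.sqrt_mul (sq_nonneg s), Real.sqrt_sq_eq_abs]
          have h1 := (le_abs_self _).trans (hM x)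
          exact (mul_le_mul_of_nonneg_left h1 (abs_nonneg s)).trans hs.le⟩
        ⟨1 / 2, by norm_num, fun x => by simp⟩
      simp only [hfd] at this
      simp only [fderiv_fun_const, Pi.zero_apply, zero_apply, mul_zero,
        Finset.sum_const_zero, sub_zero] at this
      rw [← this]
      congr 1
      funext x
      rw [Finset.mul_sum]
      congr 1
      exact Finset.sum_congr rfl fun k _ => by ring
  have hz : D = fun _ => 0 := (hDc.ae_eq_iff_eq volume continuous_const).1 hae
  exact congrFun hz x₀
end

section
/- Let j : ℝ × ℝ³ → ℝ⁴, written j = (j⁰, j¹, j², j³), be continuously differentiable with spatially compact support (there is a compact K ⊂ ℝ³ with j(t, 𝐱) = 0 for 𝐱 ∉ K), and suppose j satisfies the continuity equation ∂_t j⁰ + Σ_{k=1}^{3} ∂_{x^k} j^k = 0 everywhere. Then for every smooth bounded function τ : ℝ³ → ℝ with sup_{𝐱} |∇τ(𝐱)| ≤ 1 and every c ∈ ℝ, the flux through the graph of τ equals the flux through the hyperplane t = c: ∫_{ℝ³} ( j⁰(τ(𝐱), 𝐱) − Σ_{k=1}^{3} j^k(τ(𝐱), 𝐱) ∂_k τ(𝐱)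 ) d𝐱 = ∫_{ℝ³} j⁰(c, 𝐱) d𝐱. -/
open MeasureTheory

lemma integral_fderiv_zero_aux (H : (Fin 3 → ℝ) → ℝ) (hH : ContDiff ℝ 1 H)
    (hc : HasCompactSupport H) (v : Fin 3 → ℝ) : ∫ x, fderiv ℝ H x v = 0 := by
  have h1 : Integrable (fun x => fderiv ℝ H x v) :=
    ((hH.continuous_fderiv (by simp)).clm_apply continuous_const).integrable_of_hasCompactSupport
      (hc.fderiv_apply ℝ v)
  have h2 : Integrable H := hH.continuous.integrable_of_hasCompactSupport hc
  have := integral_mul_fderiv_eq_neg_fderiv_mul_of_integrable (μ := volume) (𝕜 := ℝ)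
    (f := fun _ : Fin 3 → ℝ => (1 : ℝ)) (g := H) (v := v) (by simp) (by simpa using h1)
    (by simpa using h2) (by fun_prop) (fun x _ => (hH.differentiable (by simp)).differentiableAt)
  simpa using this

lemma flux_core (j : ℝ × (Fin 3 → ℝ) → Fin 4 → ℝ)
    (hj : ContDiff ℝ 1 j)
    (K : Set (Fin 3 → ℝ)) (hK : IsCompact K)
    (hsupp : ∀ t x, x ∉ K → j (t, x) = 0)
    (hcont : ∀ p, ∑ μ, fderiv ℝ (fun q => j q μ) p (dir4 μ) = 0)
    (τ : (Fin 3 → ℝ) → ℝ)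
    (hτ : ContDiff ℝ 1 τ) (c : ℝ) :
    ∫ x, (j (τ x, x) 0
        - ∑ k : Fin 3, j (τ x, x) k.succ * fderiv ℝ τ x (Pi.single k 1))
      = ∫ x, j (c, x) 0 := by
  have hjμ : ∀ μ, ContDiff ℝ 1 (fun q => j q μ) := fun μ => contDiff_pi.1 hj μ
  have hjd : ∀ μ p, HasFDerivAt (fun q => j q μ) (fderiv ℝ (fun q => j q μ) p) p := fun μ p =>
    ((hjμ μ).differentiable (by simp)).differentiableAt.hasFDerivAt
  have hτd : ∀ x, HasFDerivAt τ (fderiv ℝ τ x) x := fun x =>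
    (hτ.differentiable (by simp)).differentiableAt.hasFDerivAt
  have hAc : ∀ μ, Continuous (fderiv ℝ (fun q => j q μ)) := fun μ =>
    (hjμ μ).continuous_fderiv (by simp)
  have hTc : Continuous (fderiv ℝ τ) := hτ.continuous_fderiv (by simp)
  have hτc := hτ.continuous
  have hjc : ∀ μ, Continuous (fun q => j q μ) := fun μ => (hjμ μ).continuous
  set A := fun μ => fderiv ℝ (fun q => j q μ) with hA
  have hA0 : ∀ μ t x, x ∉ K → A μ (t, x) = 0 := by
    intro μ t x hx
    have : (fun q => j q μ) =ᶠ[nhds (t, x)] fun _ => 0 := by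
      have : {q : ℝ × (Fin 3 → ℝ) | q.2 ∉ K} ∈ nhds (t, x) :=
        (hK.isClosed.isOpen_compl.preimage continuous_snd).mem_nhds hx
      filter_upwards [this] with q hq
      have := hsupp q.1 q.2 hq
      simpa using congrFun this μ
    simp [hA, this.fderiv_eq]
  set σ : ℝ → (Fin 3 → ℝ) → ℝ × (Fin 3 → ℝ) := fun s x => (c + s * (τ x - c), x) with hσ
  let g : ℝ → (Fin 3 → ℝ) → ℝ := fun s x => j (σ s x) 0
    - ∑ k : Fin 3, s * (j (σ s x) k.succ * fderiv ℝ τ x (Pi.single k 1))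
  let D : ℝ → (Fin 3 → ℝ) → ℝ := fun s x => A 0 (σ s x) (1, 0) * (τ x - c)
    - ∑ k : Fin 3, (j (σ s x) k.succ * fderiv ℝ τ x (Pi.single k 1)
      + s * (A k.succ (σ s x) (1, 0) * (τ x - c) * fderiv ℝ τ x (Pi.single k 1)))
  have hσc : Continuous (fun p : ℝ × (Fin 3 → ℝ) => σ p.1 p.2) := by
    simp only [hσ]; fun_prop
  have hDc : Continuous (fun p : ℝ × (Fin 3 → ℝ) => D p.1 p.2) := by
    have h1 : ∀ μ, Continuous (fun p : ℝ × (Fin 3 → ℝ) => A μ (σ p.1 p.2) (1, 0)) := fun μ =>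
      ((hAc μ).comp hσc).clm_apply continuous_const
    have h2 : ∀ μ, Continuous (fun p : ℝ × (Fin 3 → ℝ) => j (σ p.1 p.2) μ) := fun μ =>
      (hjc μ).comp hσc
    have h3 : ∀ v, Continuous (fun p : ℝ × (Fin 3 → ℝ) => fderiv ℝ τ p.2 v) := fun v =>
      (hTc.comp continuous_snd).clm_apply continuous_const
    simp only [D]
    fun_prop
  have hgD : ∀ x s, HasDerivAt (fun s => g s x) (D s x) s := by
    intro x s
    have hs : HasDerivAt (fun s => σ s x) ((τ x - c), 0) s := by
      have := ((hasDerivAt_id s).mul_const (τ x - c)).const_add c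
      simpa [hσ] using this.prodMk (hasDerivAt_const s x)
    have hsj : ∀ μ, HasDerivAt (fun s => j (σ s x) μ) (A μ (σ s x) (1, 0) * (τ x - c)) s := by
      intro μ
      have := (hjd μ (σ s x)).comp_hasDerivAt s hs
      have e : ((τ x - c), (0 : Fin 3 → ℝ)) = (τ x - c) • ((1 : ℝ), (0 : Fin 3 → ℝ)) := by simp
      rw [e, map_smul, smul_eq_mul, mul_comm] at this
      exact this
    refine (hsj 0).sub (HasDerivAt.fun_sum fun k _ => ?_)
    have := (hasDerivAt_id' s).fun_mul ((hsj k.succ).mul_const (fderiv ℝ τ x (Pi.single k 1)))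
    simpa using this
  have hDint : ∀ s, ∫ x, D s x = 0 := by
    intro s
    let H : Fin 3 → (Fin 3 → ℝ) → ℝ := fun k x => j (σ s x) k.succ * (τ x - c)
    have hHC : ∀ k, ContDiff ℝ 1 (H k) := by
      intro k
      have : ContDiff ℝ 1 (σ s) := by simp only [hσ]; fun_prop
      exact ((hjμ k.succ).comp this).mul (hτ.sub contDiff_const)
    have hHs : ∀ k, HasCompactSupport (H k) := fun k =>
      HasCompactSupport.intro hK fun x hx => by simp [H, hσ, hsupp _ x hx]
    have hHd : ∀ k x, fderiv ℝ (H k) x (Pi.single k 1) =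
        (s * fderiv ℝ τ x (Pi.single k 1) * A k.succ (σ s x) (1, 0)
          + A k.succ (σ s x) (0, Pi.single k 1)) * (τ x - c)
        + j (σ s x) k.succ * fderiv ℝ τ x (Pi.single k 1) := by
      intro k x
      have hs : HasFDerivAt (σ s) ((s • fderiv ℝ τ x).prod (ContinuousLinearMap.id ℝ _)) x :=
        ((((hτd x).sub_const c).const_mul s).const_add c).prodMk (hasFDerivAt_id x)
      have h1 := ((hjd k.succ (σ s x)).comp x hs).mul ((hτd x).sub_const c)
      have h2 : fderiv ℝ (H k) x = _ := h1.fderiv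
      rw [h2]
      have e : (s * fderiv ℝ τ x (Pi.single k 1), (Pi.single k 1 : Fin 3 → ℝ))
        = (s * fderiv ℝ τ x (Pi.single k 1)) • ((1 : ℝ), (0 : Fin 3 → ℝ))
          + (0, Pi.single k 1) := by simp
      simp only [_root_.add_apply, _root_.smul_apply,
        ContinuousLinearMap.comp_apply, ContinuousLinearMap.prod_apply,
        ContinuousLinearMap.id_apply, smul_eq_mul, Function.comp_apply]
      rw [e, map_add, map_smul, smul_eq_mul]
      simp only [hA]
      ring
    have hDH : ∀ x, D s x = - ∑ k, fderiv ℝ (H k) x (Pi.single k 1) := by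
      intro x
      have h := hcont (σ s x)
      rw [Fin.sum_univ_succ] at h
      have hd : ∀ k : Fin 3, dir4 k.succ = (0, Pi.single k 1) := fun k => by simp [dir4]
      have hd0 : dir4 0 = (1, 0) := by simp [dir4]
      simp only [hd, hd0, Fin.sum_univ_three] at h
      simp only [hHd, D, Fin.sum_univ_three, hA]
      linear_combination (τ x - c) * h
    simp_rw [hDH]
    rw [integral_neg, integral_finsetSum]
    · simp [integral_fderiv_zero_aux _ (hHC _) (hHs _)]
    · intro k _
      exact (((hHC k).continuous_fderiv (by simp)).clm_apply
        continuous_const).integrable_of_hasCompactSupport ((hHs k).fderiv_apply ℝ _)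
  have hD0 : ∀ s x, x ∉ K → D s x = 0 := by
    intro s x hx
    simp [D, hσ, hA0 _ _ x hx, hsupp _ x hx]
  have hgc : ∀ s, Continuous (g s) := by
    intro s
    have hs : Continuous (σ s) := by simp only [hσ]; fun_prop
    have h2 : ∀ μ, Continuous (fun x => j (σ s x) μ) := fun μ => (hjc μ).comp hs
    have h3 : ∀ v, Continuous (fun x => fderiv ℝ τ x v) := fun v => hTc.clm_apply continuous_const
    simp only [g]
    fun_prop
  have hgi : ∀ s, Integrable (g s) := fun s =>
    (hgc s).integrable_of_hasCompactSupport (HasCompactSupport.intro hK fun x hx => by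
      simp [g, hσ, hsupp _ x hx])
  have hftc : ∀ x, ∫ s in (0:ℝ)..1, D s x = g 1 x - g 0 x := fun x =>
    intervalIntegral.integral_eq_sub_of_hasDerivAt (fun s _ => hgD x s)
      ((hDc.comp (by fun_prop : Continuous fun s : ℝ => (s, x))).intervalIntegrable _ _)
  have hint : Integrable (Function.uncurry D)
      ((volume.restrict (Set.uIoc (0:ℝ) 1)).prod (volume : Measure (Fin 3 → ℝ))) := by
    have h1 : IntegrableOn (Function.uncurry D) (Set.Icc (0:ℝ) 1 ×ˢ K)
        ((volume : Measure ℝ).prod volume) :=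
      hDc.continuousOn.integrableOn_compact (isCompact_Icc.prod hK)
    have h2 : IntegrableOn (Function.uncurry D) (Set.Icc (0:ℝ) 1 ×ˢ Set.univ)
        ((volume : Measure ℝ).prod volume) := by
      refine h1.of_forall_sdiff_eq_zero (measurableSet_Icc.prod MeasurableSet.univ) ?_
      rintro ⟨s, x⟩ ⟨⟨hs, -⟩, hn⟩
      exact hD0 s x fun hx => hn ⟨hs, hx⟩
    have h3 := h2.mono_set (s := Set.uIoc (0:ℝ) 1 ×ˢ Set.univ) (Set.prod_mono (by
      rw [Set.uIoc_of_le zero_le_one]; exact Set.Ioc_subset_Icc_self) le_rfl)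
    rwa [IntegrableOn, ← Measure.prod_restrict, Measure.restrict_univ] at h3
  have hswap : ∫ x, ∫ s in (0:ℝ)..1, D s x = 0 := by
    simp_rw [intervalIntegral.integral_of_le (zero_le_one' ℝ)]
    rw [Set.uIoc_of_le zero_le_one] at hint
    rw [← integral_integral_swap hint]
    simp [hDint]
  simp_rw [hftc] at hswap
  rw [integral_sub (hgi 1) (hgi 0), sub_eq_zero] at hswap
  simpa [g, hσ] using hswap

/-- Let `j : ℝ × ℝ³ → ℝ⁴` be a continuously differentiable
current with spatially compact support satisfying the continuity equation
`∂_t j⁰ + Σ_k ∂_{x^k} j^k = 0`. Then for every smooth bounded `τ : ℝ³ → ℝ`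
with Euclidean gradient norm everywhere `≤ 1` and every `c ∈ ℝ`, the flux
through the graph of `τ` equals the flux through the hyperplane `t = c`. -/
theorem continuity_implies_flux_through_cauchy_surface
    (j : ℝ × (Fin 3 → ℝ) → Fin 4 → ℝ)
    (hj : ContDiff ℝ 1 j)
    (K : Set (Fin 3 → ℝ)) (hK : IsCompact K)
    (hsupp : ∀ t x, x ∉ K → j (t, x) = 0)
    (hcont : ∀ p, ∑ μ, fderiv ℝ (fun q => j q μ) p (dir4 μ) = 0)
    (τ : (Fin 3 → ℝ) → ℝ)
    (hτsmooth : ContDiff ℝ (⊤ : ℕ∞) τ)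
    (hτbdd : ∃ M : ℝ, ∀ x, |τ x| ≤ M)
    (hτgrad : ∀ x, Real.sqrt (∑ k : Fin 3, (fderiv ℝ τ x (Pi.single k 1)) ^ 2) ≤ 1)
    (c : ℝ) :
    ∫ x, (j (τ x, x) 0
        - ∑ k : Fin 3, j (τ x, x) k.succ * fderiv ℝ τ x (Pi.single k 1))
      = ∫ x, j (c, x) 0 := by
  exact flux_core j hj K hK hsupp hcont τ (hτsmooth.of_le (by exact_mod_cast le_top)) c
end
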